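/- Let R be a commutative ring, S a multiplicative subset of R, 0 → A → B → C → 0 an S-exact sequence of R-modules and n ≥ 0 an integer. If Ext^{n+1}_R(N, B) and Ext^{n+1}_R(N, C) are uniformly S-torsion for every R-module N, then Ext^{n+2}_R(N, A) is uniformly S-torsion for every R-module N. (That is, the S-injective dimension of A is at most 1 + max{S-id_R(B), S-id_R(C)}.) -/

import Mathlib

open CategoryTheory

universe u

/-- A module is uniformly `S`-torsion if a single `s ∈ S` kills it. -/
def UnifSTorsion {R : Type u} [CommRing R] (S : Submonoid R) (M : Type*) [Zero M] [SMul R M] :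
    Prop :=
  ∃ s ∈ S, ∀ m : M, s • m = (0 : M)

/-- The sequence `X --u--> Y --v--> Z` is `S`-exact at `Y`. -/
def SExactAt {R : Type u} [CommRing R] (S : Submonoid R) {X Y Z : Type*}
    [Zero Y] [SMul R Y] [Zero Z] (u : X → Y) (v : Y → Z) : Prop :=
  ∃ s ∈ S, (∀ y : Y, v y = 0 → ∃ x : X, s • y = u x) ∧ ∀ x : X, v (s • u x) = 0

/-!
`Ext` is `R`-linear, so if some `s ∈ S` acts on `X` through `Y`, then `Ext(N, X)` is uniformly
`S`-torsion as soon as `Ext(N, Y)` is. In this sense an `S`-exact sequence `0 → A → B → C → 0` is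
controlled by the exact sequence `0 → ker g → B → im g → 0`: some element of `S` acts on `A` through
`ker g`, and some element of `S` acts on `im g` through `C`. The long exact sequence of the latter
reduces the claim to `Ext^{n+2}(N, B)`, which is an `Ext^{n+1}` out of a syzygy of `N`.
-/

universe w v

namespace UnifSTorsion

variable {R : Type u} [CommRing R] {S : Submonoid R}
  {M N P : Type*} [AddCommGroup M] [Module R M] [AddCommGroup N] [Module R N]
  [AddCommGroup P] [Module R P]

lemma of_injective {f : M →ₗ[R] N} (hf : Function.Injective f) (h : UnifSTorsion S N) :
    UnifSTorsion S M := by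
  obtain ⟨s, hs, hN⟩ := h
  exact ⟨s, hs, fun m ↦ hf (by rw [map_smul, hN, map_zero])⟩

lemma of_surjective {f : M →ₗ[R] N} (hf : Function.Surjective f) (h : UnifSTorsion S M) :
    UnifSTorsion S N := by
  obtain ⟨s, hs, hM⟩ := h
  exact ⟨s, hs, hf.forall.2 fun m ↦ by rw [← map_smul, hM, map_zero]⟩

lemma of_exact {f : M →ₗ[R] N} {g : N →ₗ[R] P} (hfg : Function.Exact f g)
    (hM : UnifSTorsion S M) (hP : UnifSTorsion S P) : UnifSTorsion S N := by
  obtain ⟨s, hs, hM⟩ := hM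
  obtain ⟨t, ht, hP⟩ := hP
  refine ⟨s * t, S.mul_mem hs ht, fun x ↦ ?_⟩
  obtain ⟨m, hm⟩ := (hfg (t • x)).1 (by rw [map_smul, hP])
  rw [mul_smul, ← hm, ← map_smul, hM, map_zero]

end UnifSTorsion

section Comparison

variable {R : Type*} [Ring R] {C : Type*} [Category* C] [Abelian C] [Linear R C]
  [HasExt.{w} C] {X : C}

lemma smul_extMk (P : ProjectiveResolution X) {Y : C} {n m : ℕ} (r : R) (φ : P.complex.X n ⟶ Y)
    (hm : n + 1 = m) (hφ : P.complex.d m n ≫ φ = 0) :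
    r • P.extMk φ m hm hφ = P.extMk (r • φ) m hm (by rw [Linear.comp_smul, hφ, smul_zero]) := by
  simp only [Abelian.Ext.smul_eq_comp_mk₀, P.extMk_comp_mk₀, Linear.comp_smul, Category.comp_id]

variable (R) in
/-- The map sending a cocycle `Pₙ ⟶ Y` on a projective resolution of `X` to its class in
`Extⁿ(X, Y)`, in the derived-category model of `Ext`. -/
noncomputable def extMkLinearMap (P : ProjectiveResolution X) (Y : C) (n : ℕ) :
    LinearMap.ker (Linear.leftComp R Y (P.complex.d (n + 1) n)) →ₗ[R] Abelian.Ext.{w} X Y n where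
  toFun φ := P.extMk φ.1 (n + 1) rfl φ.2
  map_add' _ _ := (P.add_extMk _ _ _ rfl _ _).symm
  map_smul' r φ := (smul_extMk P r φ.1 rfl φ.2).symm

lemma extMkLinearMap_surjective (P : ProjectiveResolution X) (Y : C) (n : ℕ) :
    Function.Surjective (extMkLinearMap R P Y n) := fun α ↦ by
  obtain ⟨φ, hφ, rfl⟩ := P.extMk_surjective α (n + 1) rfl
  exact ⟨⟨φ, hφ⟩, rfl⟩

lemma mem_ker_extMkLinearMap_succ_iff (P : ProjectiveResolution X) {Y : C} {n : ℕ}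
    {φ : LinearMap.ker (Linear.leftComp R Y (P.complex.d (n + 2) (n + 1)))} :
    φ ∈ LinearMap.ker (extMkLinearMap R P Y (n + 1)) ↔
      ∃ ψ : P.complex.X n ⟶ Y, P.complex.d (n + 1) n ≫ ψ = φ :=
  P.extMk_eq_zero_iff φ.1 (n + 2) rfl φ.2 n rfl

variable [EnoughProjectives C]

variable (R) in
/-- In positive degrees, `Ext` as a left derived functor of `Hom(-, Y)` agrees with `Ext` as
morphisms in the derived category, for which Mathlib has the long exact sequences. -/
noncomputable def extSuccLinearEquiv (X Y : C) (n : ℕ) :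
    ((Ext R C (n + 1)).obj (Opposite.op X)).obj Y ≃ₗ[R] Abelian.Ext.{w} X Y (n + 1) :=
  let P := ProjectiveResolution.of X
  let K := P.complex.linearYonedaObj R Y
  let T := K.sc' n (n + 1) (n + 2)
  let toExt : LinearMap.ker T.g.hom →ₗ[R] Abelian.Ext.{w} X Y (n + 1) :=
    extMkLinearMap R P Y (n + 1)
  have range_eq_ker : LinearMap.range T.moduleCatToCycles = LinearMap.ker toExt := by
    ext φ
    exact (exists_congr fun _ ↦ Subtype.ext_iff).trans (mem_ker_extMkLinearMap_succ_iff P).symm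
  (P.isoExt (n + 1) Y ≪≫ K.homologyIsoSc' n (n + 1) (n + 2) (by simp) (by simp) ≪≫
    T.moduleCatHomologyIso).toLinearEquiv ≪≫ₗ
  Submodule.quotEquivOfEq _ _ range_eq_ker ≪≫ₗ
  toExt.quotKerEquivOfSurjective (extMkLinearMap_surjective P Y (n + 1))

end Comparison

section Torsion

variable {R : Type u} [CommRing R] {C : Type*} [Category.{v} C] [Abelian C] [Linear R C]

/-- `X` is a retract of `Y` up to `S`: some `s ∈ S` acts on `X` as a composite `X ⟶ Y ⟶ X`. With
this notion, an `S`-exact sequence is compared with an exact one. -/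
def IsSRetract (S : Submonoid R) (X Y : C) : Prop :=
  ∃ s ∈ S, ∃ (i : X ⟶ Y) (r : Y ⟶ X), i ≫ r = s • 𝟙 X

variable {S : Submonoid R}

lemma IsSRetract.unifSTorsion_abelianExt [HasExt.{w} C] {X Y : C} (h : IsSRetract S X Y)
    {N : C} {n : ℕ} (hY : UnifSTorsion S (Abelian.Ext.{w} N Y n)) :
    UnifSTorsion S (Abelian.Ext.{w} N X n) := by
  obtain ⟨s, hs, i, r, hir⟩ := h
  obtain ⟨t, ht, hY⟩ := hY
  refine ⟨t * s, S.mul_mem ht hs, fun x ↦ ?_⟩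
  have smul_eq_comp : s • x =
      (x.comp (Abelian.Ext.mk₀ i) (add_zero n)).comp (Abelian.Ext.mk₀ r) (add_zero n) := by
    rw [Abelian.Ext.comp_assoc_of_third_deg_zero, Abelian.Ext.mk₀_comp_mk₀, hir,
      Abelian.Ext.smul_eq_comp_mk₀]
  rw [mul_smul, smul_eq_comp, ← Abelian.Ext.smul_comp, hY, Abelian.Ext.zero_comp]

lemma unifSTorsion_abelianExt_X₁ [HasExt.{w} C] {T : ShortComplex C} (hT : T.ShortExact)
    {N : C} {n : ℕ} (h₃ : UnifSTorsion S (Abelian.Ext.{w} N T.X₃ n))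
    (h₂ : UnifSTorsion S (Abelian.Ext.{w} N T.X₂ (n + 1))) :
    UnifSTorsion S (Abelian.Ext.{w} N T.X₁ (n + 1)) :=
  UnifSTorsion.of_exact (f := hT.extClass.postcompOfLinear R N rfl)
    (g := (Abelian.Ext.mk₀ T.f).postcompOfLinear R N (add_zero _))
    ((ShortComplex.ab_exact_iff_function_exact _).1
      (Abelian.Ext.covariant_sequence_exact₁' N hT n (n + 1) rfl)) h₃ h₂

variable [EnoughProjectives C]

lemma unifSTorsion_ext_succ_iff_abelianExt [HasExt.{w} C] {N Y : C} {n : ℕ} :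
    UnifSTorsion S (((Ext R C (n + 1)).obj (Opposite.op N)).obj Y) ↔
      UnifSTorsion S (Abelian.Ext.{w} N Y (n + 1)) :=
  let e := extSuccLinearEquiv R N Y n
  ⟨.of_surjective (f := e.toLinearMap) e.surjective, .of_injective (f := e.toLinearMap) e.injective⟩

lemma unifSTorsion_abelianExt_succ [HasExt.{w} C] {Y : C} {n : ℕ}
    (h : ∀ N : C, UnifSTorsion S (Abelian.Ext.{w} N Y n)) (N : C) :
    UnifSTorsion S (Abelian.Ext.{w} N Y (n + 1)) := by
  have hT : (ShortComplex.mk _ _ (Limits.kernel.condition (Projective.π N))).ShortExact :=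
    { exact := ShortComplex.exact_kernel _ }
  have extClass_precomp_surjective :
      Function.Surjective (hT.extClass.precompOfLinear R Y (add_comm 1 n)) := fun x ↦
    Abelian.Ext.contravariant_sequence_exact₃ hT Y x (Abelian.Ext.eq_zero_of_projective _)
      (add_comm 1 n)
  exact (h _).of_surjective extClass_precomp_surjective

lemma unifSTorsion_ext_add_two {Y : C} {n : ℕ}
    (h : ∀ N : C, UnifSTorsion S (((Ext R C (n + 1)).obj (Opposite.op N)).obj Y)) (N : C) :
    UnifSTorsion S (((Ext R C (n + 2)).obj (Opposite.op N)).obj Y) :=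
  have : HasExt.{v} C := hasExt_of_enoughProjectives.{v} C
  have h_abelianExt (N : C) : UnifSTorsion S (Abelian.Ext.{v} N Y (n + 1)) :=
    unifSTorsion_ext_succ_iff_abelianExt.1 (h N)
  unifSTorsion_ext_succ_iff_abelianExt.2 (unifSTorsion_abelianExt_succ h_abelianExt N)

end Torsion

section SExact

lemma exists_linearMap_eq_smul_of_range_le {R A B Y : Type*} [CommRing R] [AddCommGroup A]
    [Module R A] [AddCommGroup B] [Module R B] [AddCommGroup Y] [Module R Y] {f : A →ₗ[R] B}
    {h : Y →ₗ[R] B} {s : R} (hs : ∀ x, f x = 0 → s • x = 0)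
    (h_range : LinearMap.range h ≤ LinearMap.range f) :
    ∃ l : Y →ₗ[R] A, ∀ x y, f x = h y → l y = s • x := by
  let sDesc : (A ⧸ LinearMap.ker f) →ₗ[R] A :=
    (LinearMap.ker f).liftQ (s • LinearMap.id) fun x hx ↦ by simpa using hs x hx
  let hLift : Y →ₗ[R] LinearMap.range f := h.codRestrict _ fun y ↦ h_range ⟨y, rfl⟩
  refine ⟨sDesc ∘ₗ f.quotKerEquivRange.symm.toLinearMap ∘ₗ hLift, fun x y hxy ↦ ?_⟩
  have hLift_eq : hLift y = f.quotKerEquivRange (Submodule.Quotient.mk x) := Subtype.ext hxy.symm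
  simp [hLift_eq, sDesc]

variable {R : Type u} [CommRing R] {S : Submonoid R} {A B C : ModuleCat.{v} R}

lemma SExactAt.isSRetract_ker {f : A ⟶ B} {g : B ⟶ C} (hB : SExactAt S (⇑f) (⇑g))
    (hA : ∃ s ∈ S, ∀ x : A, f x = 0 → s • x = (0 : A)) :
    IsSRetract S A (ModuleCat.of R (LinearMap.ker g.hom)) := by
  obtain ⟨a, ha, hA⟩ := hA
  obtain ⟨b, hb, h_ker, h_im⟩ := hB
  let i : A →ₗ[R] LinearMap.ker g.hom := (b • f.hom).codRestrict _ h_im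
  have smul_ker_le : LinearMap.range (b • (LinearMap.ker g.hom).subtype) ≤
      LinearMap.range f.hom := by
    rintro _ ⟨y, rfl⟩
    exact (h_ker y y.2).imp fun _ ↦ Eq.symm
  obtain ⟨r, hr⟩ := exists_linearMap_eq_smul_of_range_le hA smul_ker_le
  -- One factor `b` pushes `f x` into `ker g`, the other pushes `ker g` into the range of `f`; the
  -- factor `a` makes preimages under `f` unique.
  refine ⟨a * (b * b), S.mul_mem ha (S.mul_mem hb hb), ModuleCat.ofHom i, ModuleCat.ofHom r, ?_⟩
  ext x
  have f_smul : f.hom ((b * b) • x) = b • (i x : B) := by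
    rw [map_smul, mul_smul]
    rfl
  exact (hr _ (i x) f_smul).trans (mul_smul a (b * b) x).symm

lemma isSRetract_range {g : B ⟶ C} (hC : ∃ s ∈ S, ∀ c : C, ∃ b : B, s • c = g b) :
    IsSRetract S (ModuleCat.of R (LinearMap.range g.hom)) C := by
  obtain ⟨s, hs, hC⟩ := hC
  let r : C →ₗ[R] LinearMap.range g.hom :=
    (s • LinearMap.id).codRestrict _ fun c ↦ (hC c).imp fun _ ↦ Eq.symm
  exact ⟨s, hs, ModuleCat.ofHom (LinearMap.range g.hom).subtype, ModuleCat.ofHom r, rfl⟩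

end SExact

theorem stmt12_general {R : Type u} [CommRing R] [Small.{v} R] (S : Submonoid R)
    {A B C : ModuleCat.{v} R} (f : A ⟶ B) (g : B ⟶ C)
    (hA : ∃ s ∈ S, ∀ x : A, f x = 0 → s • x = (0 : A))
    (hB : SExactAt S (⇑f) (⇑g))
    (hC : ∃ s ∈ S, ∀ c : C, ∃ b : B, s • c = g b)
    (n : ℕ) (N : ModuleCat.{v} R)
    (hBN : UnifSTorsion S (((Ext R (ModuleCat.{v} R) (n + 2)).obj (Opposite.op N)).obj B))
    (hCN : UnifSTorsion S (((Ext R (ModuleCat.{v} R) (n + 1)).obj (Opposite.op N)).obj C)) :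
    UnifSTorsion S (((Ext R (ModuleCat.{v} R) (n + 2)).obj (Opposite.op N)).obj A) := by
  rw [unifSTorsion_ext_succ_iff_abelianExt] at hBN hCN ⊢
  have h_range := (isSRetract_range hC).unifSTorsion_abelianExt hCN
  have h_shortExact := LinearMap.shortExact_shortComplexKer g.hom.surjective_rangeRestrict
  have h_ker : UnifSTorsion S (Abelian.Ext N (.of R (LinearMap.ker g.hom)) (n + 2)) :=
    g.hom.ker_rangeRestrict ▸ unifSTorsion_abelianExt_X₁ h_shortExact h_range hBN
  exact (hB.isSRetract_ker hA).unifSTorsion_abelianExt h_ker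

/-- Given an `S`-exact sequence `0 → A → B → C → 0`, if `Ext^{n+1}(N, B)` and
`Ext^{n+1}(N, C)` are uniformly `S`-torsion for all `N`, then `Ext^{n+2}(N, A)` is
uniformly `S`-torsion for all `N` (so `S`-id A ≤ 1 + max{`S`-id B, `S`-id C}). -/
theorem stmt12 {R : Type u} [CommRing R] (S : Submonoid R)
    {A B C : ModuleCat.{u} R} (f : A ⟶ B) (g : B ⟶ C)
    (hA : ∃ s ∈ S, ∀ x : A, f x = 0 → s • x = (0 : A))
    (hB : SExactAt S (⇑f) (⇑g))
    (hC : ∃ s ∈ S, ∀ c : C, ∃ b : B, s • c = g b)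
    (n : ℕ)
    (hBid : ∀ N : ModuleCat.{u} R,
      UnifSTorsion S (((Ext R (ModuleCat.{u} R) (n + 1)).obj (Opposite.op N)).obj B))
    (hCid : ∀ N : ModuleCat.{u} R,
      UnifSTorsion S (((Ext R (ModuleCat.{u} R) (n + 1)).obj (Opposite.op N)).obj C)) :
    ∀ N : ModuleCat.{u} R,
      UnifSTorsion S (((Ext R (ModuleCat.{u} R) (n + 2)).obj (Opposite.op N)).obj A) :=
  fun N ↦ stmt12_general S f g hA hB hC n N (unifSTorsion_ext_add_two hBid N) (hCid N)
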